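/- arXiv:1808.04917 — 2 statements merged into one kernel-verified Lean document; each statement's English description precedes it below -/
import Mathlib

section
/- Let α ∈ Λ and write α = ∑_{i=0}^{n−1} ∑_{j=0}^{n−1} a_{i,j} ε₀^i ε₁^j with a_{i,j} ∈ ℤ. Then α ∈ A₁ if and only if every row sum and every column sum of the matrix [a_{i,j}] vanishes, i.e., for every i one has ∑_{j=0}^{n−1} a_{i,j} = 0 and for every j one has ∑_{i=0}^{n−1} a_{i,j} = 0. -/
noncomputable section

/-- The group `μₙ × μₙ`, realized as `Multiplicative (ZMod n) × Multiplicative (ZMod n)`. -/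
abbrev MuMu (n : ℕ) : Type := Multiplicative (ZMod n) × Multiplicative (ZMod n)

/-- The group ring `Λ = ℤ[μₙ × μₙ]`. -/
abbrev Lam (n : ℕ) : Type := MonoidAlgebra ℤ (MuMu n)

/-- `ε₀`, the first standard generator of `μₙ × μₙ` viewed in `Λ`. -/
def eps0 (n : ℕ) : Lam n := MonoidAlgebra.of ℤ (MuMu n) (Multiplicative.ofAdd 1, 1)

/-- `ε₁`, the second standard generator of `μₙ × μₙ` viewed in `Λ`. -/
def eps1 (n : ℕ) : Lam n := MonoidAlgebra.of ℤ (MuMu n) (1, Multiplicative.ofAdd 1)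

/-- The ideal `A₁ = ⟨(ε₀ − 1)(ε₁ − 1)⟩ ⊆ Λ`. -/
def A1 (n : ℕ) : Ideal (Lam n) := Ideal.span {(eps0 n - 1) * (eps1 n - 1)}

lemma coeff_aux (n : ℕ) (b : ℕ → ℤ)
    (h : ∑ i ∈ Finset.range n, b i •
      (MonoidAlgebra.of ℤ (Multiplicative (ZMod n)) (Multiplicative.ofAdd 1)) ^ i = 0) :
    ∀ i < n, b i = 0 := by
  intro k hk
  have hli : LinearIndependent ℤ (fun i : Fin n =>
      MonoidAlgebra.of ℤ (Multiplicative (ZMod n)) (Multiplicative.ofAdd ((i : ℕ) : ZMod n))) := by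
    have h1 : LinearIndependent ℤ (MonoidAlgebra.of ℤ (Multiplicative (ZMod n))) :=
      (MonoidAlgebra.basis (Multiplicative (ZMod n)) ℤ).linearIndependent
    refine h1.comp (fun i : Fin n => Multiplicative.ofAdd ((i : ℕ) : ZMod n)) ?_
    intro i j hij
    have hij' : ((i : ℕ) : ZMod n) = ((j : ℕ) : ZMod n) := Multiplicative.ofAdd.injective hij
    rw [ZMod.natCast_eq_natCast_iff'] at hij'
    rw [Nat.mod_eq_of_lt i.2, Nat.mod_eq_of_lt j.2] at hij'
    exact Fin.ext hij'
  rw [Fintype.linearIndependent_iff] at hli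
  refine hli (fun i => b i) ?_ ⟨k, hk⟩
  rw [← h, Finset.sum_range]
  refine Finset.sum_congr rfl fun i _ => ?_
  rw [← map_pow, ← ofAdd_nsmul, nsmul_one]

theorem stmt_3 (n : ℕ) (hn : 3 ≤ n) (a : ℕ → ℕ → ℤ) (α : Lam n)
    (hα : α = ∑ i ∈ Finset.range n, ∑ j ∈ Finset.range n, a i j • (eps0 n ^ i * eps1 n ^ j)) :
    α ∈ A1 n ↔
      (∀ i < n, ∑ j ∈ Finset.range n, a i j = 0) ∧
      (∀ j < n, ∑ i ∈ Finset.range n, a i j = 0) := by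
  unfold A1
  rw [Ideal.mem_span_singleton]
  constructor
  · rintro ⟨c, hc⟩
    constructor
    · let f := MonoidAlgebra.mapDomainRingHom ℤ
        (MonoidHom.fst (Multiplicative (ZMod n)) (Multiplicative (ZMod n)))
      have h0 : f (eps0 n) =
          MonoidAlgebra.of ℤ (Multiplicative (ZMod n)) (Multiplicative.ofAdd 1) := by
        simp [f, eps0]
      have h1 : f (eps1 n) = 1 := by
        simp [f, eps1, MonoidAlgebra.one_def]
      have h := congrArg f (hα.symm.trans hc)
      simp only [map_mul, map_sub, map_sum, map_zsmul, map_pow, map_one, h0, h1, sub_self,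
        mul_zero, zero_mul, one_pow, mul_one, ← Finset.sum_smul] at h
      exact coeff_aux n _ h
    · let f := MonoidAlgebra.mapDomainRingHom ℤ
        (MonoidHom.snd (Multiplicative (ZMod n)) (Multiplicative (ZMod n)))
      have h0 : f (eps1 n) =
          MonoidAlgebra.of ℤ (Multiplicative (ZMod n)) (Multiplicative.ofAdd 1) := by
        simp [f, eps1]
      have h1 : f (eps0 n) = 1 := by
        simp [f, eps0, MonoidAlgebra.one_def]
      have h := congrArg f (hα.symm.trans hc)
      rw [Finset.sum_comm] at h
      simp only [map_mul, map_sub, map_sum, map_zsmul, map_pow, map_one, h0, h1, sub_self,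
        mul_zero, zero_mul, one_pow, one_mul, ← Finset.sum_smul] at h
      exact coeff_aux n _ h
  · rintro ⟨hr, hc⟩
    have e1 : ∑ i ∈ Finset.range n, ∑ j ∈ Finset.range n, a i j • (eps0 n ^ i) = 0 :=
      Finset.sum_eq_zero fun i hi => by
        rw [← Finset.sum_smul, hr i (Finset.mem_range.1 hi), zero_smul]
    have e2 : ∑ i ∈ Finset.range n, ∑ j ∈ Finset.range n, a i j • (eps1 n ^ j) = 0 := by
      rw [Finset.sum_comm]
      exact Finset.sum_eq_zero fun i hi => by
        rw [← Finset.sum_smul, hc i (Finset.mem_range.1 hi), zero_smul]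
    have e3 : ∑ i ∈ Finset.range n, ∑ j ∈ Finset.range n, a i j • (1 : Lam n) = 0 :=
      Finset.sum_eq_zero fun i hi => by
        rw [← Finset.sum_smul, hr i (Finset.mem_range.1 hi), zero_smul]
    have e : α = ∑ i ∈ Finset.range n, ∑ j ∈ Finset.range n,
        a i j • ((eps0 n ^ i - 1) * (eps1 n ^ j - 1)) := by
      have : ∀ i j, a i j • ((eps0 n ^ i - 1) * (eps1 n ^ j - 1)) =
          a i j • (eps0 n ^ i * eps1 n ^ j) - a i j • (eps0 n ^ i) - a i j • (eps1 n ^ j)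
            + a i j • (1 : Lam n) := by
        intro i j
        rw [← smul_sub, ← smul_sub, ← smul_add]
        congr 1
        ring
      simp only [this, Finset.sum_add_distrib, Finset.sum_sub_distrib, e1, e2, e3, sub_zero,
        add_zero, hα]
    rw [e]
    exact Finset.dvd_sum fun i _ => Finset.dvd_sum fun j _ =>
      dvd_zsmul_of_dvd _ (mul_dvd_mul (sub_one_dvd_pow_sub_one _ _) (sub_one_dvd_pow_sub_one _ _))
end
end

section
/- The element S* lies in the commutator subgroup [F, F] of F; equivalently, in the abelianization of F, each generator x_{i,j} occurs in S* with total exponent 0. -/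
noncomputable section
open scoped Classical

/-- The index set of pairs `(i,j)` with `1 ≤ i, j ≤ n−1`. -/
def Idx (n : ℕ) : Type := {p : ℕ × ℕ // 1 ≤ p.1 ∧ p.1 ≤ n - 1 ∧ 1 ≤ p.2 ∧ p.2 ≤ n - 1}

/-- The free group `F` on the generators `x_{i,j}`, `1 ≤ i, j ≤ n−1`. -/
abbrev F (n : ℕ) : Type := FreeGroup (Idx n)

/-- The generator `x_{i,j}` of `F` (defined to be `1` for out-of-range indices;
all indices used below are in range). -/
def xg (n : ℕ) (i j : ℕ) : F n :=
  if h : 1 ≤ i ∧ i ≤ n - 1 ∧ 1 ≤ j ∧ j ≤ n - 1 then FreeGroup.of ⟨(i, j), h⟩ else 1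

/-- `E(i,j) ∈ F` for arbitrary integers `i, j`: it is `x_{i',j'}`, where `i', j' ∈ {1,…,n−1}`
are the representatives of `i` and `j` modulo `n`, provided neither `i` nor `j` is divisible
by `n`, and `1` otherwise. -/
def Eg (n : ℕ) (i j : ℤ) : F n :=
  if (n : ℤ) ∣ i ∨ (n : ℤ) ∣ j then 1 else xg n (i % (n : ℤ)).toNat (j % (n : ℤ)).toNat

/-- `S*_ℓ = ∏_{t=0}^{n−1} E(t−ℓ, t)·E(t−ℓ, t+1)⁻¹` (product in increasing order of `t`). -/
def SstarL (n : ℕ) (ℓ : ℕ) : F n :=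
  ((List.range n).map fun t =>
    Eg n ((t : ℤ) - (ℓ : ℤ)) (t : ℤ) * (Eg n ((t : ℤ) - (ℓ : ℤ)) ((t : ℤ) + 1))⁻¹).prod

/-- `S* = S*₀ · S*₁ ⋯ S*_{n−1}`. -/
def Sstar (n : ℕ) : F n := ((List.range n).map fun ℓ => SstarL n ℓ).prod

lemma Eg_sub_period (n : ℕ) (i j : ℤ) : Eg n (i - n) j = Eg n i j := by
  unfold Eg
  simp only [Int.sub_emod_right, dvd_sub_self_right]

lemma Eg_zero (n : ℕ) (i : ℤ) : Eg n i 0 = 1 := by simp [Eg]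

lemma Eg_self (n : ℕ) (i : ℤ) : Eg n i n = 1 := by simp [Eg]

lemma list_prod_range {M : Type*} [CommMonoid M] (n : ℕ) (f : ℕ → M) :
    ((List.range n).map f).prod = ∏ i ∈ Finset.range n, f i := by
  induction n with
  | zero => simp
  | succ k ih => rw [List.range_succ, List.map_append, List.prod_append, ih,
      Finset.prod_range_succ]; simp

lemma shift_prod {A : Type*} [CommGroup A] (n : ℕ) (φ : F n →* A) (t j : ℤ) :
    ∏ l ∈ Finset.range n, φ (Eg n (t - l) j) =
      ∏ l ∈ Finset.range n, φ (Eg n (t + 1 - l) j) := by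
  have h1 := Finset.prod_range_succ (fun l : ℕ => φ (Eg n (t + 1 - l) j)) n
  have h2 := Finset.prod_range_succ' (fun l : ℕ => φ (Eg n (t + 1 - l) j)) n
  rw [h1] at h2
  rw [Eg_sub_period] at h2
  simp only [Nat.cast_zero, sub_zero, Nat.cast_add, Nat.cast_one, add_sub_add_right_eq_sub] at h2
  exact (mul_right_cancel h2).symm

/-- the element `S*` lies in the commutator subgroup `[F, F]` of `F`. -/
theorem stmt_12 (n : ℕ) (hn : 3 ≤ n) : Sstar n ∈ commutator (F n) := by
  rw [← Abelianization.ker_of, MonoidHom.mem_ker]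
  generalize (Abelianization.of : F n →* Abelianization (F n)) = φ
  have hl : (do let a ← List.range n; pure (a : ℤ)) = (List.range n).map (fun a : ℕ => (a : ℤ)) := by
    simp [List.map_eq_flatMap]
  unfold Sstar SstarL
  rw [hl]
  simp only [map_list_prod, List.map_map, Function.comp_def, list_prod_range, map_mul, map_inv]
  rw [Finset.prod_comm]
  simp only [Finset.prod_mul_distrib, Finset.prod_inv_distrib]
  have h : ∀ t : ℕ, ∏ l ∈ Finset.range n, φ (Eg n ((t : ℤ) - l) ((t : ℤ) + 1)) =
      (fun t : ℕ => ∏ l ∈ Finset.range n, φ (Eg n ((t : ℤ) - l) (t : ℤ))) (t + 1) := by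
    intro t
    rw [shift_prod]
    push_cast
    rfl
  simp only [h]
  rw [← div_eq_mul_inv, ← Finset.prod_div_distrib]
  have h2 := Finset.prod_range_div'
    (fun t : ℕ => ∏ l ∈ Finset.range n, φ (Eg n ((t : ℤ) - l) (t : ℤ))) n
  rw [h2]
  simp [Eg_zero, Eg_self]
end
end
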